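/- arXiv:1611.04581 — 6 statements merged into one kernel-verified Lean document; each statement's English description precedes it below -/
import Mathlib

section
/- Let p ≥ 1 and let j₁, …, j_p be i.i.d. indices drawn uniformly from {1, …, p}. Define the random p × p matrix M = (1/2) Σᵢ eᵢ (eᵢ + e_{jᵢ})ᵀ, where eᵢ denotes the i-th standard basis vector of ℝᵖ (so M row i has entry 1/2 on the diagonal and entry 1/2 in column jᵢ, with both halves adding if jᵢ = i). Then E[Mᵀ M] = (1/2)(I + (1/p) 𝟙 𝟙ᵀ), where 𝟙 ∈ ℝᵖ is the all-ones vector and I is the p × p identity matrix. -/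
open Matrix BigOperators

/-! Entry `(a, b)` of `Mᵀ M` is `¼ ∑ i, ([i = a] + [j i = a]) ([i = b] + [j i = b])`, in which each summand
depends on a single index `j i`. Averaging over all assignments therefore amounts to averaging over
one uniform index `k` (`sum_eval_eq`), and the expansion of the product gives
`[a = b] + 2 / p + [a = b]` after summing over `i` and `k`. -/

/-- A function of the single coordinate `j i`, summed over all `j`: the other `p - 1`
coordinates are free. The factor `p` on the left avoids the exponent `p - 1`. -/
lemma sum_eval_eq (p : ℕ) (i : Fin p) (f : Fin p → ℝ) :
    (p : ℝ) * ∑ j : Fin p → Fin p, f (j i) = (p : ℝ) ^ p * ∑ k, f k := by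
  rw [← (Equiv.funSplitAt i (Fin p)).symm.sum_comp, Fintype.sum_prod_type]
  have hp : 0 < p := i.pos
  simp only [Equiv.funSplitAt_symm_apply, dite_true, Finset.sum_const, Finset.card_univ,
    Fintype.card_fun, Fintype.card_fin, nsmul_eq_mul]
  rw [← Finset.mul_sum, ← mul_assoc]
  congr 1
  have hc : Fintype.card {x : Fin p // x ≠ i} = p - 1 := by simp
  rw [hc]
  push_cast
  exact mul_pow_sub_one hp.ne' _

/-- Second-moment computation for the synchronous pull-gossip averaging matrix:
with `j₁, …, j_p` i.i.d. uniform on `{1, …, p}` (modeled by averaging over all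
`p^p` equally likely index assignments `j : Fin p → Fin p`), and
`M j = (1/2) ∑ i, eᵢ (eᵢ + e_{j i})ᵀ`, one has
`E[Mᵀ M] = (1/2)(I + (1/p) 𝟙 𝟙ᵀ)`. -/
theorem stmt_0 (p : ℕ) (hp : 1 ≤ p)
    (M : (Fin p → Fin p) → Matrix (Fin p) (Fin p) ℝ)
    (hM : ∀ j : Fin p → Fin p,
      M j = (1 / 2 : ℝ) •
        ∑ i : Fin p, vecMulVec (Pi.single i 1) (Pi.single i 1 + Pi.single (j i) 1)) :
    ((p : ℝ) ^ p)⁻¹ • ∑ j : Fin p → Fin p, (M j)ᵀ * M j =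
      (1 / 2 : ℝ) •
        ((1 : Matrix (Fin p) (Fin p) ℝ) +
          (p : ℝ)⁻¹ • vecMulVec (fun _ => (1 : ℝ)) (fun _ => (1 : ℝ))) := by
  have hp0 : (p : ℝ) ≠ 0 := by positivity
  have hent : ∀ j i a, M j i a =
      (1 / 2 : ℝ) * ((if i = a then 1 else 0) + (if j i = a then 1 else 0)) := by
    intro j i a
    rw [hM, Matrix.smul_apply, Matrix.sum_apply]
    simp [vecMulVec_apply, Pi.single_apply, eq_comm]
  ext a b
  have key : (p : ℝ) * ∑ j : Fin p → Fin p, ((M j)ᵀ * M j) a b =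
      (p : ℝ) ^ p * ((p : ℝ) * (1 / 2) * (if a = b then 1 else 0) + 1 / 2) := by
    simp only [Matrix.mul_apply, Matrix.transpose_apply, hent]
    rw [Finset.sum_comm, Finset.mul_sum]
    have h := fun i : Fin p => sum_eval_eq p i (fun k =>
      (1 / 2 : ℝ) * ((if i = a then 1 else 0) + (if k = a then 1 else 0)) *
      ((1 / 2 : ℝ) * ((if i = b then 1 else 0) + (if k = b then 1 else 0))))
    rw [Finset.sum_congr rfl fun i _ => h i, ← Finset.mul_sum]
    congr 1
    have hexp : ∀ i k : Fin p,
        (1 / 2 : ℝ) * ((if i = a then 1 else 0) + (if k = a then 1 else 0)) *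
        ((1 / 2 : ℝ) * ((if i = b then 1 else 0) + (if k = b then 1 else 0))) =
        1 / 4 * ((if i = a then if i = b then 1 else 0 else 0)
          + (if i = a then 1 else 0) * (if k = b then 1 else 0)
          + (if i = b then 1 else 0) * (if k = a then 1 else 0)
          + (if k = a then if k = b then 1 else 0 else 0)) := by
      intro i k
      split_ifs <;> norm_num
    simp only [hexp, ← Finset.mul_sum, Finset.sum_add_distrib, Finset.sum_ite_eq',
      Finset.mem_univ, if_true, Finset.sum_const, Finset.card_univ, Fintype.card_fin,
      nsmul_eq_mul, mul_one]
    ring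
  simp only [Matrix.smul_apply, Matrix.sum_apply, Matrix.add_apply, Matrix.one_apply,
    vecMulVec_apply, smul_eq_mul, mul_one]
  rw [← mul_right_inj' hp0, mul_left_comm, key, inv_mul_cancel_left₀ (pow_ne_zero p hp0)]
  field_simp
end

section
/- Let f : ℝ → ℝ be m-strongly convex with L-Lipschitz derivative (0 < m ≤ L) and unique minimizer θ⋆. Fix θ ∈ ℝᵖ, a step size α with 0 < α ≤ 2/(m+L), and σ ≥ 0. Let j₁, …, j_p be i.i.d. uniform indices on {1, …, p} and let ξ₁, …, ξ_p be random variables with mean 0 and variance at most σ², independent of the indices. Define the one-step synchronous pull-gossip update θ′ᵢ = (1/2)(θᵢ + θ_{jᵢ}) − α ( f′((1/2)(θᵢ + θ_{jᵢ})) + ξᵢ ) for each i. Then E[ Σᵢ (θ′ᵢ − θ⋆)² ] ≤ (1 − 2α·mL/(m+L)) Σᵢ (θᵢ − θ⋆)² + α² p σ². -/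
/-!
With `y = (θ i + θ (j i)) / 2` the mean after gossip at node `i`, the noise has mean zero, so
`E (θ' i - θ⋆)² = (y - α f' y - θ⋆)² + α² E (ξ i)²`. Coercivity of `f'` makes the noiseless step
a contraction: `(y - α f' y - θ⋆)² ≤ c (y - θ⋆)²` with `c = 1 - 2 α m L / (m + L) ≥ 0`
(`gradient_step_sq_le`). By convexity of the square,
`(y - θ⋆)² ≤ ((θ i - θ⋆)² + (θ (j i) - θ⋆)²) / 2`, and since `j i` is uniform, the average over `j`
of the sum over `i` of the right-hand side is `∑ i, (θ i - θ⋆)²` (`sum_assignments_apply`).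
-/

open MeasureTheory BigOperators

/-- In dimension one, the slope `g / a` lies in `[m, L]`, which is the inequality
`(g - m a) (L a - g) ≥ 0`. Here `a` stands for `y - θ⋆` and `g` for `f' y`. -/
lemma coercive_of_bounds {m L a g : ℝ} (hmg : m * a ^ 2 ≤ g * a) (hgL : |g| ≤ L * |a|) :
    m * L * a ^ 2 + g ^ 2 ≤ (m + L) * (g * a) := by
  rcases eq_or_ne a 0 with rfl | ha
  · have : g = 0 := by simpa using hgL
    simp [this]
  · have ha2 : 0 < a ^ 2 := by positivity
    have h1 : g * a ≤ L * a ^ 2 := by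
      calc g * a ≤ |g * a| := le_abs_self _
        _ = |g| * |a| := abs_mul _ _
        _ ≤ L * |a| * |a| := by gcongr
        _ = L * a ^ 2 := by rw [mul_assoc, ← sq, sq_abs]
    have h2 := mul_nonneg (sub_nonneg.2 hmg) (sub_nonneg.2 h1)
    have h3 : (g * a - m * a ^ 2) * (L * a ^ 2 - g * a)
        = a ^ 2 * ((m + L) * (g * a) - (m * L * a ^ 2 + g ^ 2)) := by ring
    rw [h3] at h2
    linarith [nonneg_of_mul_nonneg_right h2 ha2]

lemma gradient_step_sq_le {m L α a g : ℝ} (hmL : 0 < m + L) (hα : 0 < α)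
    (hα2 : α ≤ 2 / (m + L)) (hmg : m * a ^ 2 ≤ g * a) (hgL : |g| ≤ L * |a|) :
    (a - α * g) ^ 2 ≤ (1 - 2 * α * (m * L / (m + L))) * a ^ 2 := by
  have h := coercive_of_bounds hmg hgL
  have h1 : m * L / (m + L) * a ^ 2 + g ^ 2 / (m + L) ≤ g * a := by
    rw [div_mul_eq_mul_div, ← add_div, div_le_iff₀ hmL]
    linarith
  have h2 : α * g ^ 2 ≤ 2 * (g ^ 2 / (m + L)) := by
    calc α * g ^ 2 ≤ 2 / (m + L) * g ^ 2 := by gcongr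
      _ = _ := by ring
  have h3 := mul_le_mul_of_nonneg_left h1 hα.le
  have h4 := mul_le_mul_of_nonneg_left h2 hα.le
  linarith

lemma contraction_factor_nonneg {m L α : ℝ} (hm : 0 < m) (hL : 0 < L)
    (hα2 : α ≤ 2 / (m + L)) : 0 ≤ 1 - 2 * α * (m * L / (m + L)) := by
  have h1 : α * (m * L / (m + L)) ≤ 2 / (m + L) * (m * L / (m + L)) := by gcongr
  have h2 : 2 / (m + L) * (m * L / (m + L)) ≤ 1 / 2 := by
    rw [div_mul_div_comm, div_le_iff₀ (by positivity)]
    nlinarith [sq_nonneg (m - L)]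
  linarith

/-- The coordinate `j i` of a uniformly random assignment `j` is uniform. -/
lemma sum_assignments_apply {p : ℕ} (hp : 1 ≤ p) (h : Fin p → ℝ) (i : Fin p) :
    ((p : ℝ) ^ p)⁻¹ * ∑ j : Fin p → Fin p, h (j i) = (p : ℝ)⁻¹ * ∑ k, h k := by
  have hs := Fintype.sum_piFinset_apply h Finset.univ i
  simp only [Fintype.piFinset_univ, Finset.card_univ, Fintype.card_fin, nsmul_eq_mul,
    Nat.cast_pow] at hs
  have hp0 : (p : ℝ) ≠ 0 := by positivity
  have hpow : (p : ℝ) ^ p = (p : ℝ) ^ (p - 1) * p := by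
    rw [← pow_succ, Nat.sub_add_cancel hp]
  rw [hs, hpow]
  field_simp

/-- Centred noise contributes to the second moment only through its own second moment. -/
lemma integral_sub_noise_sq {Ω : Type*} [MeasurableSpace Ω] (μ : Measure Ω)
    [IsProbabilityMeasure μ] {ξ : Ω → ℝ} (hint : Integrable ξ μ)
    (hint2 : Integrable (fun ω => ξ ω ^ 2) μ) (hmean : ∫ ω, ξ ω ∂μ = 0) (b α : ℝ) :
    Integrable (fun ω => (b - α * ξ ω) ^ 2) μ ∧
      ∫ ω, (b - α * ξ ω) ^ 2 ∂μ = b ^ 2 + α ^ 2 * ∫ ω, ξ ω ^ 2 ∂μ := by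
  have he : (fun ω => (b - α * ξ ω) ^ 2)
      = fun ω => (b ^ 2 - 2 * b * α * ξ ω) + α ^ 2 * ξ ω ^ 2 := by
    funext ω; ring
  have i1 : Integrable (fun ω => b ^ 2 - 2 * b * α * ξ ω) μ :=
    (integrable_const _).sub (hint.const_mul _)
  have i2 : Integrable (fun ω => α ^ 2 * ξ ω ^ 2) μ := hint2.const_mul _
  rw [he]
  refine ⟨i1.add i2, ?_⟩
  rw [integral_add i1 i2, integral_sub (integrable_const _) (hint.const_mul _),
    integral_const_mul, integral_const_mul, hmean]
  simp

/-- One-step descent lemma for synchronous pull-gossip SGD: `f` is `m`-strongly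
convex with `L`-Lipschitz derivative `f'` and minimizer `θ⋆`; each node `i`
averages with a uniformly random node `j i` (i.i.d. uniform indices, modeled by
averaging over all `p^p` index assignments, independent of the noise by the
product structure) and takes a noisy gradient step with zero-mean noise of
variance at most `σ²`.  Then
`E[∑ᵢ (θ'ᵢ − θ⋆)²] ≤ (1 − 2α mL/(m+L)) ∑ᵢ (θᵢ − θ⋆)² + α² p σ²`. -/
theorem stmt_2 (p : ℕ) (hp : 1 ≤ p)
    (m L α σ : ℝ) (hm : 0 < m) (hmL : m ≤ L)
    (hα : 0 < α) (hα2 : α ≤ 2 / (m + L)) (hσ : 0 ≤ σ)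
    (f f' : ℝ → ℝ) (θstar : ℝ)
    (hderiv : ∀ x, HasDerivAt f (f' x) x)
    (hstrong : ∀ x z, m * (x - z) ^ 2 ≤ (f' x - f' z) * (x - z))
    (hlip : ∀ x z, |f' x - f' z| ≤ L * |x - z|)
    (hmin : ∀ x, f θstar ≤ f x)
    (θ : Fin p → ℝ)
    {Ω : Type*} [MeasurableSpace Ω] (μ : Measure Ω) [IsProbabilityMeasure μ]
    (ξ : Fin p → Ω → ℝ)
    (hmeas : ∀ i, Measurable (ξ i))
    (hint : ∀ i, Integrable (ξ i) μ)
    (hint2 : ∀ i, Integrable (fun ω => ξ i ω ^ 2) μ)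
    (hmean : ∀ i, ∫ ω, ξ i ω ∂μ = 0)
    (hvar : ∀ i, ∫ ω, ξ i ω ^ 2 ∂μ ≤ σ ^ 2)
    (θ' : (Fin p → Fin p) → Ω → Fin p → ℝ)
    (hθ' : ∀ j ω i, θ' j ω i =
      (1 / 2) * (θ i + θ (j i)) -
        α * (f' ((1 / 2) * (θ i + θ (j i))) + ξ i ω)) :
    ((p : ℝ) ^ p)⁻¹ * ∑ j : Fin p → Fin p, ∫ ω, ∑ i, (θ' j ω i - θstar) ^ 2 ∂μ ≤
      (1 - 2 * α * (m * L / (m + L))) * ∑ i, (θ i - θstar) ^ 2 +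
        α ^ 2 * p * σ ^ 2 := by
  have hL : 0 < L := hm.trans_le hmL
  have hfs : f' θstar = 0 :=
    IsLocalMin.hasDerivAt_eq_zero (Filter.Eventually.of_forall hmin) (hderiv θstar)
  set c := 1 - 2 * α * (m * L / (m + L)) with hc
  have hc0 : 0 ≤ c := contraction_factor_nonneg hm hL hα2
  have hp0 : (p : ℝ) ≠ 0 := by positivity
  have node : ∀ (j : Fin p → Fin p) (i : Fin p),
      Integrable (fun ω => (θ' j ω i - θstar) ^ 2) μ ∧
      ∫ ω, (θ' j ω i - θstar) ^ 2 ∂μ ≤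
        c * ((θ i - θstar) ^ 2 / 2 + (θ (j i) - θstar) ^ 2 / 2) + α ^ 2 * σ ^ 2 := by
    intro j i
    set y := (1 / 2) * (θ i + θ (j i)) with hy
    have he : (fun ω => (θ' j ω i - θstar) ^ 2)
        = fun ω => ((y - θstar - α * f' y) - α * ξ i ω) ^ 2 := by
      funext ω; rw [hθ']; ring
    obtain ⟨h1, h2⟩ := integral_sub_noise_sq μ (hint i) (hint2 i) (hmean i)
      (y - θstar - α * f' y) α
    rw [he]
    refine ⟨h1, ?_⟩
    rw [h2]
    have hstep : (y - θstar - α * f' y) ^ 2 ≤ c * (y - θstar) ^ 2 :=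
      gradient_step_sq_le (by positivity) hα hα2
        (by simpa [hfs] using hstrong y θstar) (by simpa [hfs] using hlip y θstar)
    have hconv : (y - θstar) ^ 2 ≤ (θ i - θstar) ^ 2 / 2 + (θ (j i) - θstar) ^ 2 / 2 := by
      rw [hy]; nlinarith [sq_nonneg (θ i - θ (j i))]
    have := mul_le_mul_of_nonneg_left hconv hc0
    have := mul_le_mul_of_nonneg_left (hvar i) (sq_nonneg α)
    linarith
  have hconst : ∀ x : ℝ, ((p : ℝ) ^ p)⁻¹ * ∑ _j : Fin p → Fin p, x = x := by
    intro x
    simp [hp0]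
  calc ((p : ℝ) ^ p)⁻¹ * ∑ j : Fin p → Fin p, ∫ ω, ∑ i, (θ' j ω i - θstar) ^ 2 ∂μ
      ≤ ((p : ℝ) ^ p)⁻¹ * ∑ j : Fin p → Fin p, ∑ i,
        (c * ((θ i - θstar) ^ 2 / 2 + (θ (j i) - θstar) ^ 2 / 2) + α ^ 2 * σ ^ 2) := by
        gcongr with j
        rw [integral_finsetSum _ fun i _ => (node j i).1]
        exact Finset.sum_le_sum fun i _ => (node j i).2
    _ = ∑ i, (c / 2 * (θ i - θstar) ^ 2 + α ^ 2 * σ ^ 2 +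
          c / 2 * ((p : ℝ)⁻¹ * ∑ k, (θ k - θstar) ^ 2)) := by
        rw [Finset.sum_comm, Finset.mul_sum]
        refine Finset.sum_congr rfl fun i _ => ?_
        rw [← sum_assignments_apply hp (fun k => (θ k - θstar) ^ 2) i,
          ← hconst (c / 2 * (θ i - θstar) ^ 2 + α ^ 2 * σ ^ 2), mul_left_comm (c / 2),
          Finset.mul_sum (a := c / 2),
          ← mul_add, ← Finset.sum_add_distrib]
        congr 1
        refine Finset.sum_congr rfl fun j _ => ?_
        ring
    _ = c * ∑ i, (θ i - θstar) ^ 2 + α ^ 2 * p * σ ^ 2 := by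
        rw [Finset.sum_add_distrib, Finset.sum_add_distrib, ← Finset.mul_sum]
        simp only [Finset.sum_const, Finset.card_univ, Fintype.card_fin, nsmul_eq_mul]
        field_simp
        ring
end

section
/- Let p ≥ 1, 0 < β < 1, and let I and J be independent indices drawn uniformly from {1, …, p}. Define the random p × p matrix D = Id + β e_I (e_J − e_I)ᵀ, where eᵢ is the i-th standard basis vector of ℝᵖ. Then E[Dᵀ D] = (1 − 2β(1−β)/p) Id + (2β(1−β)/p²) 𝟙 𝟙ᵀ. -/
open Matrix BigOperators

/-!
Writing `v = e_J − e_I`, the relation `e_Iᵀ e_I = 1` gives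
`Dᵀ D = Id + β (e_I vᵀ + v e_Iᵀ) + β² v vᵀ`. Summing over all pairs `(I, J)`,
`∑ e_I vᵀ = 𝟙𝟙ᵀ − p Id` and `∑ v vᵀ = 2p Id − 2 𝟙𝟙ᵀ`; dividing by `p²` gives the claim.
-/

/-- `(Id + β e wᵀ)ᵀ (Id + β e wᵀ)` expanded for the basis vector `e = e_i`. -/
lemma gram_rank_one_update {p : ℕ} (β : ℝ) (i : Fin p) (w : Fin p → ℝ) :
    (1 + β • vecMulVec (Pi.single i 1) w)ᵀ * (1 + β • vecMulVec (Pi.single i 1) w) =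
      1 + β • (vecMulVec (Pi.single i 1) w + vecMulVec w (Pi.single i 1)) +
        β ^ 2 • vecMulVec w w := by
  simp only [transpose_add, transpose_one, transpose_smul, transpose_vecMulVec, add_mul, mul_add,
    one_mul, mul_one, smul_mul_assoc, mul_smul_comm, vecMulVec_mul_vecMulVec, single_dotProduct,
    Pi.single_eq_same, smul_add, smul_smul, pow_two, one_smul]
  abel

lemma sum_single_vecMulVec_sub (p : ℕ) :
    ∑ q : Fin p × Fin p, vecMulVec (Pi.single q.1 (1 : ℝ)) (Pi.single q.2 1 - Pi.single q.1 1) =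
      vecMulVec (fun _ => (1 : ℝ)) (fun _ => (1 : ℝ)) - (p : ℝ) • 1 := by
  ext a b
  by_cases hab : a = b <;>
    simp [Fintype.sum_prod_type, Matrix.sum_apply, vecMulVec_apply, Pi.single_apply, mul_sub,
      Finset.sum_sub_distrib, hab, one_apply]

lemma sum_vecMulVec_sub_sub (p : ℕ) :
    ∑ q : Fin p × Fin p, vecMulVec (Pi.single q.2 (1 : ℝ) - Pi.single q.1 1)
        (Pi.single q.2 1 - Pi.single q.1 1) =
      (2 * p : ℝ) • 1 - (2 : ℝ) • vecMulVec (fun _ => (1 : ℝ)) (fun _ => (1 : ℝ)) := by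
  ext a b
  by_cases hab : a = b <;>
    simp [Fintype.sum_prod_type, Matrix.sum_apply, vecMulVec_apply, Pi.single_apply, mul_sub,
      Finset.sum_sub_distrib, hab, one_apply] <;> ring

/-- Second moment of the asynchronous pull-gossip update matrix
`D = I + β e_I (e_J − e_I)ᵀ` with `I, J` independent uniform on `{1, …, p}`
(modeled by averaging over all `p²` equally likely pairs):
`E[Dᵀ D] = (1 − 2β(1−β)/p) I + (2β(1−β)/p²) 𝟙 𝟙ᵀ`. -/
theorem stmt_4 (p : ℕ) (hp : 1 ≤ p) (β : ℝ) (hβ0 : 0 < β) (hβ1 : β < 1)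
    (D : Fin p × Fin p → Matrix (Fin p) (Fin p) ℝ)
    (hD : ∀ q : Fin p × Fin p,
      D q = 1 + β • vecMulVec (Pi.single q.1 1)
        (Pi.single q.2 1 - Pi.single q.1 1)) :
    ((p : ℝ) ^ 2)⁻¹ • ∑ q : Fin p × Fin p, (D q)ᵀ * D q =
      (1 - 2 * β * (1 - β) / p) • (1 : Matrix (Fin p) (Fin p) ℝ) +
        (2 * β * (1 - β) / p ^ 2) • vecMulVec (fun _ => (1 : ℝ)) (fun _ => (1 : ℝ)) := by
  have hp0 : (p : ℝ) ≠ 0 := by positivity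
  have hsymm : ∑ q : Fin p × Fin p,
      vecMulVec (Pi.single q.2 1 - Pi.single q.1 1) (Pi.single q.1 (1 : ℝ)) =
        vecMulVec (fun _ => (1 : ℝ)) (fun _ => (1 : ℝ)) - (p : ℝ) • 1 := by
    simpa [transpose_sum, transpose_vecMulVec] using
      congrArg transpose (sum_single_vecMulVec_sub p)
  have hone : ∑ _q : Fin p × Fin p, (1 : Matrix (Fin p) (Fin p) ℝ) = (p : ℝ) ^ 2 • 1 := by
    rw [Finset.sum_const, ← Nat.cast_smul_eq_nsmul ℝ]
    simp [pow_two]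
  simp only [hD, gram_rank_one_update, Finset.sum_add_distrib, ← Finset.smul_sum,
    sum_single_vecMulVec_sub, sum_vecMulVec_sub_sub, hsymm, hone]
  ext a b
  simp only [vecMulVec_apply, Matrix.add_apply, Matrix.sub_apply, Matrix.smul_apply, smul_eq_mul]
  field_simp
  ring
end

section
/- Let p ≥ 1, 0 < β < 1, and let I and J be independent indices drawn uniformly from {1, …, p}. Define the random p × p matrix D = Id + β e_I (e_J − e_I)ᵀ. Then E[Dᵀ 𝟙 𝟙ᵀ D] = (2β²/p) Id + (1 − 2β²/p²) 𝟙 𝟙ᵀ. -/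
open Matrix BigOperators

/-! The column sums of `D` form the vector `v = 𝟙 + β (e_J − e_I)`, so `Dᵀ 𝟙 𝟙ᵀ D = v vᵀ`.
In the expectation of `v vᵀ` the terms linear in `β` cancel because `I` and `J` have the same
law, and `E[(e_J − e_I)(e_J − e_I)ᵀ] = (2/p) Id − (2/p²) 𝟙 𝟙ᵀ` by independence. -/

/-- The quadratic form through `𝟙 𝟙ᵀ` only sees the column sums. -/
lemma transpose_mul_ones_mul_apply {p : ℕ} (M : Matrix (Fin p) (Fin p) ℝ) (a b : Fin p) :
    (Mᵀ * vecMulVec (fun _ => (1 : ℝ)) (fun _ => (1 : ℝ)) * M :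
      Matrix (Fin p) (Fin p) ℝ) a b =
      (∑ k, M k a) * ∑ k, M k b := by
  simp [Matrix.mul_apply, vecMulVec_apply, Finset.mul_sum]

lemma colSum_gossip {p : ℕ} (β : ℝ) (i j a : Fin p) :
    ∑ k, ((1 : Matrix (Fin p) (Fin p) ℝ) + β • vecMulVec (Pi.single i 1)
      (Pi.single j 1 - Pi.single i 1) :
        Matrix (Fin p) (Fin p) ℝ) k a =
      1 + β * ((if a = j then 1 else 0) - (if a = i then 1 else 0)) := by
  simp [Matrix.one_apply, vecMulVec_apply, Finset.sum_add_distrib, Pi.single_apply]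

/-- For the asynchronous pull-gossip update matrix `D = I + β e_I (e_J − e_I)ᵀ`
with `I, J` independent uniform on `{1, …, p}` (modeled by averaging over all
`p²` equally likely pairs):
`E[Dᵀ 𝟙 𝟙ᵀ D] = (2β²/p) I + (1 − 2β²/p²) 𝟙 𝟙ᵀ`. -/
theorem stmt_5 (p : ℕ) (hp : 1 ≤ p) (β : ℝ) (hβ0 : 0 < β) (hβ1 : β < 1)
    (D : Fin p × Fin p → Matrix (Fin p) (Fin p) ℝ)
    (hD : ∀ q : Fin p × Fin p,
      D q = 1 + β • vecMulVec (Pi.single q.1 1)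
        (Pi.single q.2 1 - Pi.single q.1 1)) :
    ((p : ℝ) ^ 2)⁻¹ • ∑ q : Fin p × Fin p,
        (D q)ᵀ * vecMulVec (fun _ => (1 : ℝ)) (fun _ => (1 : ℝ)) * D q =
      (2 * β ^ 2 / p) • (1 : Matrix (Fin p) (Fin p) ℝ) +
        (1 - 2 * β ^ 2 / p ^ 2) • vecMulVec (fun _ => (1 : ℝ)) (fun _ => (1 : ℝ)) := by
  have hp0 : (p : ℝ) ≠ 0 := by positivity
  ext a b
  have expand : ∀ i j : Fin p,
      (1 + β * ((if a = j then (1 : ℝ) else 0) - (if a = i then 1 else 0))) *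
        (1 + β * ((if b = j then 1 else 0) - (if b = i then 1 else 0))) =
      1 + β * (if a = j then 1 else 0) - β * (if a = i then 1 else 0)
        + β * (if b = j then 1 else 0) - β * (if b = i then 1 else 0)
        + β ^ 2 * ((if a = j then 1 else 0) * (if b = j then 1 else 0))
        + β ^ 2 * ((if a = i then 1 else 0) * (if b = i then 1 else 0))
        - β ^ 2 * ((if a = j then 1 else 0) * (if b = i then 1 else 0))
        - β ^ 2 * ((if a = i then 1 else 0) * (if b = j then 1 else 0)) := by
    intro i j
    ring
  have diag : ∑ k : Fin p, (if a = k then (1 : ℝ) else 0) * (if b = k then 1 else 0) =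
      (1 : Matrix (Fin p) (Fin p) ℝ) a b := by
    simp [Matrix.one_apply]
  have diag_avg : ∑ k : Fin p,
      (if a = k then (1 : ℝ) else 0) * ((p : ℝ) * (if b = k then 1 else 0)) =
      p * (1 : Matrix (Fin p) (Fin p) ℝ) a b := by
    rw [← diag, Finset.mul_sum]
    exact Finset.sum_congr rfl fun k _ => by ring
  rw [Matrix.smul_apply, Matrix.sum_apply]
  simp only [transpose_mul_ones_mul_apply, hD, colSum_gossip, smul_eq_mul]
  rw [Fintype.sum_prod_type]
  simp only [expand, Finset.sum_add_distrib, Finset.sum_sub_distrib, ← Finset.mul_sum, diag]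
  simp only [← Finset.sum_mul, Finset.sum_const, Finset.sum_ite_eq, Finset.mem_univ, if_true,
    Finset.card_univ, Fintype.card_fin, nsmul_eq_mul, Matrix.add_apply, Matrix.smul_apply,
    smul_eq_mul, vecMulVec_apply]
  simp only [diag_avg, ← Finset.mul_sum, Finset.sum_ite_eq, Finset.mem_univ, if_true]
  field_simp
  ring
end

section
/- Let p ≥ 1, 0 < β < 1, and let I and J be independent indices drawn uniformly from {1, …, p}. Define the random p × p matrix D = Id + β e_I (e_J − e_I)ᵀ. Then E[ Dᵀ D − (1/p) Dᵀ 𝟙 𝟙ᵀ D ] = μ ( Id − (1/p) 𝟙 𝟙ᵀ ), where μ = 1 − 2β(1−β)/p − 2β²/p². In particular 𝟙 lies in the kernel of this expected matrix, and for every x ∈ ℝᵖ one has xᵀ E[ Dᵀ D − (1/p) Dᵀ 𝟙 𝟙ᵀ D ] x = μ ‖x − x̄ 𝟙‖², where x̄ = (1/p) Σᵢ xᵢ. -/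
/-!
Write `u = e_J − e_I`, so that `D = Id + β e_I uᵀ` and `Dᵀ𝟙 = 𝟙 + β u`. Then
`DᵀD = Id + β (e_I uᵀ + u e_Iᵀ) + β² u uᵀ`, which gives every entry of the random matrix as a
polynomial in the indicators of `I` and `J` (`gossip_entry`). Averaging over the `p²` pairs uses
`E[u] = 0`, `E[u uᵀ] = (2/p) (Id − 𝟙𝟙ᵀ/p)` and `E[e_I uᵀ] = −(1/p) (Id − 𝟙𝟙ᵀ/p)`; collecting the
coefficients yields `μ`. The kernel and the quadratic form are then those of the projection
`Id − 𝟙𝟙ᵀ/p`.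
-/

open Matrix BigOperators

/-- Entry `(a, b)` of `DᵀD − c Dᵀ𝟙𝟙ᵀD` for `D = Id + β e_i uᵀ` with an arbitrary vector `u`. -/
lemma gossip_entry {p : ℕ} (β c : ℝ) (i : Fin p) (u : Fin p → ℝ)
    (D : Matrix (Fin p) (Fin p) ℝ) (hD : D = 1 + β • vecMulVec (Pi.single i 1) u) (a b : Fin p) :
    (Dᵀ * D - c • (Dᵀ * vecMulVec (fun _ => (1 : ℝ)) (fun _ => (1 : ℝ)) * D) :
      Matrix (Fin p) (Fin p) ℝ) a b =
      (1 : Matrix (Fin p) (Fin p) ℝ) a b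
        + β * (u a * (Pi.single i 1 : Fin p → ℝ) b + (Pi.single i 1 : Fin p → ℝ) a * u b)
        + β ^ 2 * (u a * u b) - c * ((1 + β * u a) * (1 + β * u b)) := by
  have hDD : Dᵀ * D = 1 + β • vecMulVec u (Pi.single i 1) + β • vecMulVec (Pi.single i 1) u
      + β ^ 2 • vecMulVec u u := by
    simp only [hD, transpose_add, transpose_one, transpose_smul, transpose_vecMulVec, mul_add,
      add_mul, one_mul, mul_one, smul_mul_assoc, mul_smul_comm, vecMulVec_mul_vecMulVec]
    simp [smul_smul, pow_two, add_assoc]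
  have hcol : Dᵀ *ᵥ (fun _ => (1 : ℝ)) = fun a => 1 + β * u a := by
    ext a
    simp [hD, mulVec, dotProduct, vecMulVec_apply, Matrix.one_apply, Finset.sum_add_distrib,
      Pi.single_apply]
  have hrow : (fun _ => (1 : ℝ)) ᵥ* D = fun a => 1 + β * u a := by
    rw [← hcol, mulVec_transpose]
  rw [mul_vecMulVec, vecMulVec_mul, hcol, hrow, hDD]
  simp only [Matrix.sub_apply, Matrix.add_apply, Matrix.smul_apply, vecMulVec_apply, smul_eq_mul]
  ring

/-- For the asynchronous pull-gossip update matrix `D = I + β e_I (e_J − e_I)ᵀ`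
with `I, J` independent uniform on `{1, …, p}` (modeled by averaging over all
`p²` equally likely pairs):
`E[Dᵀ D − (1/p) Dᵀ 𝟙 𝟙ᵀ D] = μ (I − (1/p) 𝟙 𝟙ᵀ)` with
`μ = 1 − 2β(1−β)/p − 2β²/p²`; in particular `𝟙` lies in the kernel, and the
quadratic form equals `μ ‖x − x̄ 𝟙‖²` for every `x`. -/
theorem stmt_6 (p : ℕ) (hp : 1 ≤ p) (β : ℝ) (hβ0 : 0 < β) (hβ1 : β < 1)
    (D : Fin p × Fin p → Matrix (Fin p) (Fin p) ℝ)
    (hD : ∀ q : Fin p × Fin p,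
      D q = 1 + β • vecMulVec (Pi.single q.1 1)
        (Pi.single q.2 1 - Pi.single q.1 1))
    (E : Matrix (Fin p) (Fin p) ℝ)
    (hE : E = ((p : ℝ) ^ 2)⁻¹ • ∑ q : Fin p × Fin p,
      ((D q)ᵀ * D q -
        (p : ℝ)⁻¹ • ((D q)ᵀ * vecMulVec (fun _ => (1 : ℝ)) (fun _ => (1 : ℝ)) * D q))) :
    E = (1 - 2 * β * (1 - β) / p - 2 * β ^ 2 / p ^ 2) •
        ((1 : Matrix (Fin p) (Fin p) ℝ) -
          (p : ℝ)⁻¹ • vecMulVec (fun _ => (1 : ℝ)) (fun _ => (1 : ℝ))) ∧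
    E.mulVec (fun _ => (1 : ℝ)) = 0 ∧
    (∀ x : Fin p → ℝ,
      x ⬝ᵥ E.mulVec x =
        (1 - 2 * β * (1 - β) / p - 2 * β ^ 2 / p ^ 2) *
          ∑ i, (x i - (p : ℝ)⁻¹ * ∑ k, x k) ^ 2) := by
  have hp0 : (p : ℝ) ≠ 0 := by positivity
  have hEq : E = (1 - 2 * β * (1 - β) / p - 2 * β ^ 2 / p ^ 2) •
        ((1 : Matrix (Fin p) (Fin p) ℝ) -
          (p : ℝ)⁻¹ • vecMulVec (fun _ => (1 : ℝ)) (fun _ => (1 : ℝ))) := by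
    ext a b
    rw [hE, Matrix.smul_apply, Matrix.sum_apply]
    simp only [gossip_entry β (p : ℝ)⁻¹ _ _ _ (hD _)]
    rw [Fintype.sum_prod_type]
    by_cases hab : a = b
    · subst hab
      simp only [Pi.sub_apply, mul_add, add_mul, mul_sub, sub_mul, Finset.sum_add_distrib,
        Finset.sum_sub_distrib, Pi.single_apply]
      simp [vecMulVec_apply]
      field_simp
      ring
    · simp only [Pi.sub_apply, mul_add, add_mul, mul_sub, sub_mul, Finset.sum_add_distrib,
        Finset.sum_sub_distrib, Pi.single_apply]
      simp [vecMulVec_apply, hab]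
      field_simp
      ring
  have hmul : ∀ x : Fin p → ℝ, E *ᵥ x = fun i =>
      (1 - 2 * β * (1 - β) / p - 2 * β ^ 2 / p ^ 2) * (x i - (p : ℝ)⁻¹ * ∑ k, x k) := by
    intro x
    rw [hEq]
    ext i
    simp [smul_mulVec, sub_mulVec, vecMulVec_mulVec, dotProduct]
  refine ⟨hEq, ?_, fun x => ?_⟩
  · rw [hmul]
    ext i
    simp [hp0]
  · rw [hmul]
    set m := (p : ℝ)⁻¹ * ∑ k, x k with hm
    -- The deviations from the mean sum to zero, so one factor `x i` may be centred for free.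
    have hzero : ∑ i, (x i - m) = 0 := by
      simp [Finset.sum_sub_distrib, hm, hp0]
    have hsq : ∑ i, (x i - m) ^ 2 = ∑ i, x i * (x i - m) := by
      have : ∑ i, (x i - m) ^ 2 = ∑ i, x i * (x i - m) - m * ∑ i, (x i - m) := by
        rw [Finset.mul_sum, ← Finset.sum_sub_distrib]
        exact Finset.sum_congr rfl fun i _ => by ring
      rw [this, hzero, mul_zero, sub_zero]
    rw [hsq, Finset.mul_sum, dotProduct]
    exact Finset.sum_congr rfl fun i _ => by ring
end

section
/- Let p ≥ 1, 0 < β < 1, and let I and J be independent indices drawn uniformly from {1, …, p}. Define the random p × p matrix D = Id + β e_I (e_J − e_I)ᵀ. Then for every x ∈ ℝᵖ, (1 − 2β(1−β)/p) ‖x‖² ≤ xᵀ E[Dᵀ D] x ≤ ‖x‖²; in particular E[ ‖D x‖² ] ≤ ‖x‖² for every x ∈ ℝᵖ. -/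
/-!
The quadratic form `xᵀ E[Dᵀ D] x` is the average of `‖D x‖²` over the index pairs `(I, J)`.
Since `D` only changes coordinate `I`,
`‖D x‖² = ‖x‖² + ((1 - β) x_I + β x_J)² - x_I²`, and summing over all pairs gives
`p² ‖x‖² - 2β(1 - β) (p ‖x‖² - (∑ xᵢ)²)` (`sum_normSq_pull`). Both bounds follow from
`0 ≤ (∑ xᵢ)² ≤ p ‖x‖²`, the second inequality being Cauchy–Schwarz.
-/

open Matrix BigOperators

lemma pull_mulVec_apply {p : ℕ} (β : ℝ) (a b : Fin p) (x : Fin p → ℝ) (i : Fin p) :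
    ((1 + β • vecMulVec (Pi.single a 1) (Pi.single b 1 - Pi.single a 1) :
      Matrix (Fin p) (Fin p) ℝ).mulVec x) i =
      x i + if i = a then β * (x b - x a) else 0 := by
  rw [add_mulVec, one_mulVec, smul_mulVec, vecMulVec_mulVec, sub_dotProduct,
    single_dotProduct, single_dotProduct]
  by_cases h : i = a <;> simp [h]

lemma normSq_pull {p : ℕ} (β : ℝ) (a b : Fin p) (x : Fin p → ℝ) :
    ∑ i, (x i + if i = a then β * (x b - x a) else 0) ^ 2 =
      ∑ i, x i ^ 2 + (((1 - β) * x a + β * x b) ^ 2 - x a ^ 2) := by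
  have h : ∀ i, (x i + if i = a then β * (x b - x a) else 0) ^ 2 =
      x i ^ 2 + if i = a then ((1 - β) * x a + β * x b) ^ 2 - x a ^ 2 else 0 := by
    intro i
    split_ifs with hi
    · subst hi; ring
    · ring
  simp [h, Finset.sum_add_distrib]

/-- The quadratic-form version of
`p² E[Dᵀ D] = (p² - 2β(1 - β) p) Id + 2β(1 - β) 𝟙 𝟙ᵀ`. -/
lemma sum_normSq_pull {p : ℕ} (β : ℝ) (x : Fin p → ℝ) :
    ∑ q : Fin p × Fin p,
        (∑ i, x i ^ 2 + (((1 - β) * x q.1 + β * x q.2) ^ 2 - x q.1 ^ 2)) =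
      (p : ℝ) ^ 2 * ∑ i, x i ^ 2 -
        2 * β * (1 - β) * (p * ∑ i, x i ^ 2 - (∑ i, x i) ^ 2) := by
  have h : ∀ q : Fin p × Fin p,
      (∑ i, x i ^ 2 + (((1 - β) * x q.1 + β * x q.2) ^ 2 - x q.1 ^ 2)) =
      ∑ i, x i ^ 2 + (((1 - β) ^ 2 - 1) * x q.1 ^ 2 + β ^ 2 * x q.2 ^ 2 +
        2 * β * (1 - β) * (x q.1 * x q.2)) := fun q => by ring
  have h1 : ∑ q : Fin p × Fin p, x q.1 ^ 2 = p * ∑ i, x i ^ 2 := by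
    simp [Fintype.sum_prod_type, Finset.mul_sum]
  have h2 : ∑ q : Fin p × Fin p, x q.2 ^ 2 = p * ∑ i, x i ^ 2 := by
    simp [Fintype.sum_prod_type]
  have h3 : ∑ q : Fin p × Fin p, x q.1 * x q.2 = (∑ i, x i) ^ 2 := by
    rw [sq, Finset.sum_mul_sum, Fintype.sum_prod_type]
  simp only [h, Finset.sum_add_distrib, ← Finset.mul_sum, h1, h2, h3]
  simp only [Finset.sum_const, Finset.card_univ, Fintype.card_prod, Fintype.card_fin,
    nsmul_eq_mul, Nat.cast_mul]
  ring

lemma dotProduct_sum_gram {p : ℕ} {ι : Type*} [Fintype ι] (c : ℝ)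
    (D : ι → Matrix (Fin p) (Fin p) ℝ) (x : Fin p → ℝ) :
    x ⬝ᵥ (c • ∑ q, (D q)ᵀ * D q).mulVec x = c * ∑ q, ∑ i, ((D q).mulVec x i) ^ 2 := by
  rw [smul_mulVec, dotProduct_smul, sum_mulVec, dotProduct_sum, smul_eq_mul]
  congr 1
  refine Finset.sum_congr rfl fun q _ => ?_
  rw [← mulVec_mulVec, dotProduct_mulVec, vecMul_transpose]
  simp [dotProduct, sq]

/-- Spectral bounds for the second moment of the asynchronous pull-gossip
update matrix `D = I + β e_I (e_J − e_I)ᵀ` with `I, J` independent uniform on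
`{1, …, p}` (modeled by averaging over all `p²` equally likely pairs):
`(1 − 2β(1−β)/p) ‖x‖² ≤ xᵀ E[Dᵀ D] x ≤ ‖x‖²`; in particular
`E[‖D x‖²] ≤ ‖x‖²` for every `x`. -/
theorem stmt_7 (p : ℕ) (hp : 1 ≤ p) (β : ℝ) (hβ0 : 0 < β) (hβ1 : β < 1)
    (D : Fin p × Fin p → Matrix (Fin p) (Fin p) ℝ)
    (hD : ∀ q : Fin p × Fin p,
      D q = 1 + β • vecMulVec (Pi.single q.1 1)
        (Pi.single q.2 1 - Pi.single q.1 1)) :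
    (∀ x : Fin p → ℝ,
      (1 - 2 * β * (1 - β) / p) * (∑ i, x i ^ 2) ≤
          x ⬝ᵥ (((p : ℝ) ^ 2)⁻¹ • ∑ q : Fin p × Fin p, (D q)ᵀ * D q).mulVec x ∧
        x ⬝ᵥ (((p : ℝ) ^ 2)⁻¹ • ∑ q : Fin p × Fin p, (D q)ᵀ * D q).mulVec x ≤
          ∑ i, x i ^ 2) ∧
    (∀ x : Fin p → ℝ,
      ((p : ℝ) ^ 2)⁻¹ * ∑ q : Fin p × Fin p, ∑ i, ((D q).mulVec x i) ^ 2 ≤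
        ∑ i, x i ^ 2) := by
  have key : ∀ x : Fin p → ℝ,
      ((p : ℝ) ^ 2)⁻¹ * ∑ q : Fin p × Fin p, ∑ i, ((D q).mulVec x i) ^ 2 =
        ∑ i, x i ^ 2 - 2 * β * (1 - β) / p * ∑ i, x i ^ 2 +
          2 * β * (1 - β) / (p : ℝ) ^ 2 * (∑ i, x i) ^ 2 := by
    intro x
    have hp0 : (p : ℝ) ≠ 0 := by positivity
    simp only [hD, pull_mulVec_apply, normSq_pull, sum_normSq_pull]
    field_simp
    ring
  have hβ : 0 ≤ 2 * β * (1 - β) := by nlinarith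
  have lower : ∀ x : Fin p → ℝ, (1 - 2 * β * (1 - β) / p) * (∑ i, x i ^ 2) ≤
      ((p : ℝ) ^ 2)⁻¹ * ∑ q : Fin p × Fin p, ∑ i, ((D q).mulVec x i) ^ 2 := by
    intro x
    rw [key]
    have : 0 ≤ 2 * β * (1 - β) / (p : ℝ) ^ 2 * (∑ i, x i) ^ 2 := by positivity
    linarith
  have upper : ∀ x : Fin p → ℝ,
      ((p : ℝ) ^ 2)⁻¹ * ∑ q : Fin p × Fin p, ∑ i, ((D q).mulVec x i) ^ 2 ≤
        ∑ i, x i ^ 2 := by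
    intro x
    rw [key]
    have cs : (∑ i, x i) ^ 2 ≤ p * ∑ i, x i ^ 2 := by
      simpa using sq_sum_le_card_mul_sum_sq (s := Finset.univ) (f := x)
    have hc : 2 * β * (1 - β) / (p : ℝ) ^ 2 * (∑ i, x i) ^ 2 ≤
        2 * β * (1 - β) / (p : ℝ) ^ 2 * (p * ∑ i, x i ^ 2) := by gcongr
    have he : 2 * β * (1 - β) / (p : ℝ) ^ 2 * (p * ∑ i, x i ^ 2) =
        2 * β * (1 - β) / p * ∑ i, x i ^ 2 := by
      field_simp
    linarith
  refine ⟨fun x => ?_, upper⟩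
  rw [dotProduct_sum_gram]
  exact ⟨lower x, upper x⟩
end
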